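/- Let k be a field of characteristic different from 2 and 3, let J1 ∈ k with J1 ≠ 0 and J1 ≠ 1728, and let v ∈ k. Set N = 14929920 − 17280·J1 + 5·J1² + 10368·v²·J1 − 6·v²·J1² − 13824·v³·J1 + 8·v³·J1² + 9·v⁴·J1², a1 = N / (16·(J1 − 1728)²), and a2 = (3/2)·(v²·J1 − J1 + 1728)/(J1 − 1728). If the Weierstrass curve E1 : y² = x³ − (3 + 2·a2)·x + (−4·a1 + 2 + 2·a2 + a2²) is nonsingular, then its j-invariant equals J1. -/

import Mathlib

/-! With `D = J1 - 1728`, the parametrization is chosen so that the curve collapses to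
`y² = x³ - 3 (v² J1 / D) x - 2 v³ J1 / D`. This is the twist by `v` of the curve
`y² = x³ - 3 c x - 2 c`, `c = J1 / D`, whose `j`-invariant is `1728 c / (c - 1) = J1`.
In terms of the invariants: `c₄ ^ 3 = J1 * Δ`, and `Δ ≠ 0` since the curve is elliptic. -/

theorem stmt_4 (k : Type*) [Field k] (h2 : (2 : k) ≠ 0) (h3 : (3 : k) ≠ 0)
    (J1 : k) (hJ0 : J1 ≠ 0) (hJ1728 : J1 ≠ 1728) (v : k)
    (N a1 a2 : k)
    (hN : N = 14929920 - 17280 * J1 + 5 * J1 ^ 2 + 10368 * v ^ 2 * J1 - 6 * v ^ 2 * J1 ^ 2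
      - 13824 * v ^ 3 * J1 + 8 * v ^ 3 * J1 ^ 2 + 9 * v ^ 4 * J1 ^ 2)
    (ha1 : a1 = N / (16 * (J1 - 1728) ^ 2))
    (ha2 : a2 = 3 / 2 * ((v ^ 2 * J1 - J1 + 1728) / (J1 - 1728)))
    (E1 : WeierstrassCurve k)
    (hE1 : E1 = ⟨0, 0, 0, -(3 + 2 * a2), -4 * a1 + 2 + 2 * a2 + a2 ^ 2⟩)
    (i1 : E1.IsElliptic) :
    @WeierstrassCurve.j k _ E1 i1 = J1 := by
  have hD : J1 - 1728 ≠ 0 := sub_ne_zero.mpr hJ1728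
  have hA : -(3 + 2 * a2) = -3 * (v ^ 2 * J1 / (J1 - 1728)) := by
    rw [ha2]
    field_simp
    ring
  have hB : -4 * a1 + 2 + 2 * a2 + a2 ^ 2 = -2 * (v ^ 3 * J1 / (J1 - 1728)) := by
    -- `16 = 2 ^ 4` lets `field_simp` clear the denominator of `a1` using only `2 ≠ 0`.
    have h16 : (16 : k) = 2 ^ 4 := by norm_num
    rw [ha1, ha2, hN, h16]
    field_simp
    ring
  rw [hA, hB] at hE1
  have key : E1.c₄ ^ 3 = J1 * E1.Δ := by
    rw [hE1]
    simp only [WeierstrassCurve.c₄, WeierstrassCurve.Δ, WeierstrassCurve.b₂,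
      WeierstrassCurve.b₄, WeierstrassCurve.b₆, WeierstrassCurve.b₈]
    field_simp
    ring
  have hΔ : E1.Δ ≠ 0 := i1.isUnit.ne_zero
  rw [WeierstrassCurve.j, key, Units.val_inv_eq_inv_val, WeierstrassCurve.coe_Δ']
  field_simp
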